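/- Linear heat-semigroup estimate for algebraically localized data. Let d > 0, c ∈ ℝ, M ≥ 4d and r ≥ 3. Then there exists a constant C > 0 such that for every x ∈ ℝ and every t > 0: ∫_ℝ θ_{d,c}(x−y, t) (1+|y|)^{−r} dy ≤ C [ (1 + |x+ct| + √t)^{−r} + e^{−(x+ct)²/(M(1+t))}/√(1+t) ]. -/

import Mathlib

open MeasureTheory

noncomputable section

/-- The drifting heat kernel `θ_{d,c}(x,t) = e^{−(x+ct)²/(4dt)}/√(4πdt)`. -/
def driftKernel (d c x t : ℝ) : ℝ :=
  Real.exp (-(x + c * t) ^ 2 / (4 * d * t)) / Real.sqrt (4 * Real.pi * d * t)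

lemma hk_rpow (r a b k : ℝ) (hr : 0 ≤ r) (ha : 0 < a) (hb : 0 < b) (hk : 0 < k) (h : b ≤ k * a) :
    a ^ (-r) ≤ k ^ r * b ^ (-r) := by
  have h1 : b ^ r ≤ k ^ r * a ^ r := by
    rw [← Real.mul_rpow hk.le ha.le]
    exact Real.rpow_le_rpow hb.le h hr
  rw [Real.rpow_neg ha.le, Real.rpow_neg hb.le, ← div_eq_mul_inv, inv_eq_one_div,
    div_le_div_iff₀ (by positivity) (by positivity)]
  linarith

lemma hk_gauss (b z : ℝ) (hb : 0 < b) :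
    Integrable (fun y : ℝ => Real.exp (-b * (z - y) ^ 2)) ∧
      (∫ y : ℝ, Real.exp (-b * (z - y) ^ 2)) = Real.sqrt (Real.pi / b) := by
  constructor
  · exact (integrable_exp_neg_mul_sq hb).comp_sub_left z
  · rw [integral_sub_left_eq_self (fun y : ℝ => Real.exp (-b * y ^ 2)) volume z, integral_gaussian]

lemma hk_J : Integrable (fun y : ℝ => (1 + |y|) ^ (-2 : ℝ)) := by
  have := integrable_one_add_norm (E := ℝ) (μ := volume) (r := 2) (by simp)
  simpa using this

/-- small time -/
lemma hk_small (d r : ℝ) (hd : 0 < d) (hr : 3 ≤ r) :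
    ∃ C : ℝ, 0 < C ∧ ∀ z t : ℝ, 0 < t → t ≤ 1 →
      (∫ y : ℝ, Real.exp (-(z - y) ^ 2 / (4 * d * t)) / Real.sqrt (4 * Real.pi * d * t)
        * (1 + |y|) ^ (-r)) ≤ C * (1 + |z| + Real.sqrt t) ^ (-r) := by
  refine ⟨Real.sqrt 2 * Real.exp (2 * d * r ^ 2) * 2 ^ r, by positivity, ?_⟩
  intro z t ht ht1
  have hpi := Real.pi_pos
  set N := Real.sqrt (4 * Real.pi * d * t) with hN
  have hNpos : 0 < N := Real.sqrt_pos.2 (by positivity)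
  have hb : 0 < 1 / (8 * d * t) := by positivity
  obtain ⟨hi, hv⟩ := hk_gauss (1 / (8 * d * t)) z hb
  have hsq : Real.sqrt (Real.pi / (1 / (8 * d * t))) = Real.sqrt 2 * N := by
    rw [hN, ← Real.sqrt_mul (by norm_num)]
    congr 1
    field_simp
    ring
  have hst : Real.sqrt t ≤ 1 := Real.sqrt_le_one.2 ht1
  have hz := abs_nonneg z
  have hS : (1 + |z|) ^ (-r) ≤ 2 ^ r * (1 + |z| + Real.sqrt t) ^ (-r) :=
    hk_rpow r _ _ 2 (by linarith) (by positivity) (by positivity) (by norm_num) (by linarith)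
  have hpt : ∀ y : ℝ, Real.exp (-(z - y) ^ 2 / (4 * d * t)) / N * (1 + |y|) ^ (-r) ≤
      ((1 + |z|) ^ (-r) * Real.exp (2 * d * r ^ 2) / N) *
        Real.exp (-(1 / (8 * d * t)) * (z - y) ^ 2) := by
    intro y
    have hw := abs_nonneg (z - y)
    have hy := abs_nonneg y
    have htri : |z| ≤ |z - y| + |y| := by simpa using abs_add_le (z - y) y
    have h1 : (1 + |y|) ^ (-r) ≤ (1 + |z - y|) ^ r * (1 + |z|) ^ (-r) :=
      hk_rpow r _ _ _ (by linarith) (by positivity) (by positivity) (by positivity)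
        (by nlinarith)
    have h2 : (1 + |z - y|) ^ r ≤ Real.exp (r * |z - y|) := by
      rw [mul_comm, Real.exp_mul]
      apply Real.rpow_le_rpow (by positivity) _ (by linarith)
      linarith [Real.add_one_le_exp (|z - y|)]
    have h3 : Real.exp (-(z - y) ^ 2 / (4 * d * t)) * Real.exp (r * |z - y|) ≤
        Real.exp (2 * d * r ^ 2) * Real.exp (-(1 / (8 * d * t)) * (z - y) ^ 2) := by
      rw [← Real.exp_add, ← Real.exp_add]
      apply Real.exp_le_exp.2
      rw [← sq_abs (z - y)]
      set w := |z - y|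
      have e1 : -w ^ 2 / (4 * d * t) = -(2 * (w ^ 2 / (8 * d * t))) := by
        field_simp
        ring
      have e2 : -(1 / (8 * d * t)) * w ^ 2 = -(w ^ 2 / (8 * d * t)) := by ring
      have e3 : w ^ 2 / (8 * d) ≤ w ^ 2 / (8 * d * t) := by
        apply div_le_div_of_nonneg_left (by positivity) (by positivity)
        nlinarith
      have e4 : r * w ≤ w ^ 2 / (8 * d) + 2 * d * r ^ 2 := by
        have : w ^ 2 / (8 * d) + 2 * d * r ^ 2 - r * w = (w - 4 * d * r) ^ 2 / (8 * d) := by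
          field_simp
          ring
        have h0 : 0 ≤ (w - 4 * d * r) ^ 2 / (8 * d) := by positivity
        linarith
      rw [e1, e2]
      linarith
    have hZ : 0 ≤ (1 + |z|) ^ (-r) := by positivity
    calc Real.exp (-(z - y) ^ 2 / (4 * d * t)) / N * (1 + |y|) ^ (-r)
        ≤ Real.exp (-(z - y) ^ 2 / (4 * d * t)) / N *
            (Real.exp (r * |z - y|) * (1 + |z|) ^ (-r)) := by
          apply mul_le_mul_of_nonneg_left _ (by positivity)
          exact h1.trans (mul_le_mul_of_nonneg_right h2 hZ)
      _ = (Real.exp (-(z - y) ^ 2 / (4 * d * t)) * Real.exp (r * |z - y|)) *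
            ((1 + |z|) ^ (-r) / N) := by ring
      _ ≤ (Real.exp (2 * d * r ^ 2) * Real.exp (-(1 / (8 * d * t)) * (z - y) ^ 2)) *
            ((1 + |z|) ^ (-r) / N) := mul_le_mul_of_nonneg_right h3 (by positivity)
      _ = _ := by ring
  have hmono := integral_mono_of_nonneg (μ := volume)
    (Filter.Eventually.of_forall (fun y : ℝ => by
      have := abs_nonneg y
      show (0 : ℝ) ≤ Real.exp (-(z - y) ^ 2 / (4 * d * t)) / N * (1 + |y|) ^ (-r)
      positivity))
    (hi.const_mul ((1 + |z|) ^ (-r) * Real.exp (2 * d * r ^ 2) / N))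
    (Filter.Eventually.of_forall hpt)
  refine hmono.trans ?_
  rw [integral_const_mul, hv, hsq]
  calc (1 + |z|) ^ (-r) * Real.exp (2 * d * r ^ 2) / N * (Real.sqrt 2 * N)
      = Real.sqrt 2 * Real.exp (2 * d * r ^ 2) * (1 + |z|) ^ (-r) := by field_simp
    _ ≤ Real.sqrt 2 * Real.exp (2 * d * r ^ 2) * (2 ^ r * (1 + |z| + Real.sqrt t) ^ (-r)) :=
        mul_le_mul_of_nonneg_left hS (by positivity)
    _ = _ := by ring

lemma hk_N (d t : ℝ) (hd : 0 < d) (ht : 1 ≤ t) :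
    1 / Real.sqrt (4 * Real.pi * d * t) ≤ 2 / Real.sqrt (4 * Real.pi * d) / Real.sqrt (1 + t) := by
  have hpi := Real.pi_pos
  have h0 : 0 < Real.sqrt (4 * Real.pi * d) := Real.sqrt_pos.2 (by positivity)
  have h1 : 0 < Real.sqrt t := Real.sqrt_pos.2 (by positivity)
  have h2 : 0 < Real.sqrt (1 + t) := Real.sqrt_pos.2 (by positivity)
  rw [Real.sqrt_mul (by positivity)]
  have h3 : Real.sqrt (1 + t) ≤ 2 * Real.sqrt t := by
    rw [Real.sqrt_le_left (by positivity), mul_pow, Real.sq_sqrt (by positivity)]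
    linarith
  rw [div_div, div_le_div_iff₀ (by positivity) (by positivity)]
  nlinarith

lemma hk_two (r y : ℝ) (hr : 3 ≤ r) : (1 + |y|) ^ (-r) ≤ (1 + |y|) ^ (-2 : ℝ) :=
  Real.rpow_le_rpow_of_exponent_le (by linarith [abs_nonneg y]) (by linarith)

lemma hk_exp (d M z t : ℝ) (hd : 0 < d) (hM : 4 * d ≤ M) (ht : 1 ≤ t) :
    Real.exp (-(z ^ 2 / (4 * d * t))) ≤ Real.exp (-z ^ 2 / (M * (1 + t))) := by
  apply Real.exp_le_exp.2
  rw [neg_div]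
  apply neg_le_neg
  apply div_le_div_of_nonneg_left (by positivity) (by positivity)
  apply mul_le_mul hM (by linarith) (by linarith) (by linarith)

/-- large time, center -/
lemma hk_center (d M r : ℝ) (hd : 0 < d) (hM : 4 * d ≤ M) (hr : 3 ≤ r) :
    ∃ C : ℝ, 0 ≤ C ∧ ∀ z t : ℝ, 1 ≤ t → |z| ≤ Real.sqrt t →
      (∫ y : ℝ, Real.exp (-(z - y) ^ 2 / (4 * d * t)) / Real.sqrt (4 * Real.pi * d * t)
        * (1 + |y|) ^ (-r)) ≤
      C * (Real.exp (-z ^ 2 / (M * (1 + t))) / Real.sqrt (1 + t)) := by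
  have hJ0 : 0 ≤ ∫ y : ℝ, (1 + |y|) ^ (-2 : ℝ) := integral_nonneg (fun y => by
    have := abs_nonneg y
    show (0 : ℝ) ≤ (1 + |y|) ^ (-2 : ℝ)
    positivity)
  set J := ∫ y : ℝ, (1 + |y|) ^ (-2 : ℝ) with hJ
  refine ⟨2 / Real.sqrt (4 * Real.pi * d) * J * Real.exp (1 / (4 * d)), by positivity, ?_⟩
  intro z t ht hz
  have hNle := hk_N d t hd ht
  have hpi := Real.pi_pos
  set N := Real.sqrt (4 * Real.pi * d * t) with hN
  have hNpos : 0 < N := Real.sqrt_pos.2 (by positivity)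
  have hmono := integral_mono_of_nonneg (μ := volume)
    (f := fun y : ℝ => Real.exp (-(z - y) ^ 2 / (4 * d * t)) / N * (1 + |y|) ^ (-r))
    (Filter.Eventually.of_forall (fun y : ℝ => by
      have := abs_nonneg y
      show (0 : ℝ) ≤ Real.exp (-(z - y) ^ 2 / (4 * d * t)) / N * (1 + |y|) ^ (-r)
      positivity))
    (hk_J.const_mul (1 / N))
    (Filter.Eventually.of_forall (fun y : ℝ => by
      have := abs_nonneg y
      show Real.exp (-(z - y) ^ 2 / (4 * d * t)) / N * (1 + |y|) ^ (-r) ≤ 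
        1 / N * (1 + |y|) ^ (-2 : ℝ)
      apply mul_le_mul _ (hk_two r y hr) (by positivity) (by positivity)
      apply div_le_div_of_nonneg_right _ hNpos.le
      apply Real.exp_le_one_iff.2
      rw [neg_div]
      have : 0 ≤ (z - y) ^ 2 / (4 * d * t) := by positivity
      linarith))
  refine hmono.trans ?_
  rw [integral_const_mul, ← hJ]
  have hE : 1 ≤ Real.exp (1 / (4 * d)) * Real.exp (-z ^ 2 / (M * (1 + t))) := by
    refine le_trans ?_ (mul_le_mul_of_nonneg_left (hk_exp d M z t hd hM ht) (Real.exp_pos _).le)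
    rw [← Real.exp_add]
    apply Real.one_le_exp
    have hz2 : z ^ 2 ≤ t := by
      rw [← sq_abs, ← Real.sq_sqrt (by linarith : (0:ℝ) ≤ t)]
      exact pow_le_pow_left₀ (abs_nonneg z) hz 2
    have : z ^ 2 / (4 * d * t) ≤ 1 / (4 * d) := by
      rw [div_le_div_iff₀ (by positivity) (by positivity)]
      nlinarith
    linarith
  have hs : 0 < Real.sqrt (1 + t) := Real.sqrt_pos.2 (by linarith)
  calc 1 / N * J ≤ 2 / Real.sqrt (4 * Real.pi * d) / Real.sqrt (1 + t) * J :=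
        mul_le_mul_of_nonneg_right hNle hJ0
    _ = 2 / Real.sqrt (4 * Real.pi * d) / Real.sqrt (1 + t) * J * 1 := by ring
    _ ≤ 2 / Real.sqrt (4 * Real.pi * d) / Real.sqrt (1 + t) * J *
        (Real.exp (1 / (4 * d)) * Real.exp (-z ^ 2 / (M * (1 + t)))) :=
        mul_le_mul_of_nonneg_left hE (by positivity)
    _ = _ := by ring

/-- chord bound for the logarithm -/
lemma hk_log (y Y : ℝ) (hy : 0 ≤ y) (hY : y ≤ Y) (hY0 : 0 < Y) :
    y / Y * Real.log (1 + Y) ≤ Real.log (1 + y) := by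
  have h := strictConcaveOn_log_Ioi.concaveOn.2
    (show (1 : ℝ) ∈ Set.Ioi (0 : ℝ) from Set.mem_Ioi.2 one_pos)
    (show 1 + Y ∈ Set.Ioi (0 : ℝ) from Set.mem_Ioi.2 (by positivity))
    (show 0 ≤ 1 - y / Y by rw [sub_nonneg, div_le_one hY0]; exact hY) (show 0 ≤ y / Y by positivity) (by ring)
  simp only [smul_eq_mul, Real.log_one, mul_zero, zero_add] at h
  have e : (1 - y / Y) * 1 + y / Y * (1 + Y) = 1 + y := by
    field_simp
    ring
  rwa [e] at h

/-- key pointwise bound -/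
lemma hk_key (K Z y r : ℝ) (hK : 0 ≤ K) (hZ : 0 < Z) (hr : 3 ≤ r) (hy : |y| ≤ Z / 8) :
    Real.exp (-K + 2 * K * |y| / Z) * (1 + |y|) ^ (-r) ≤
      (Real.exp (-K) + (1 + Z / 8) ^ (-r)) * (1 + |y|) ^ (-2 : ℝ) := by
  have hy0 := abs_nonneg y
  have e : (1 + |y|) ^ (-r) = (1 + |y|) ^ (-(r - 2)) * (1 + |y|) ^ (-2 : ℝ) := by
    rw [← Real.rpow_add (by positivity)]
    congr 1
    ring
  rw [e, ← mul_assoc]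
  apply mul_le_mul_of_nonneg_right _ (by positivity)
  by_cases hc : K / 4 ≤ (r - 2) * Real.log (1 + Z / 8)
  · have hl := hk_log |y| (Z / 8) hy0 hy (by positivity)
    have h1 : 2 * K * |y| / Z ≤ (r - 2) * Real.log (1 + |y|) := by
      calc 2 * K * |y| / Z = |y| / (Z / 8) * (K / 4) := by
            field_simp
            ring
        _ ≤ |y| / (Z / 8) * ((r - 2) * Real.log (1 + Z / 8)) :=
            mul_le_mul_of_nonneg_left hc (by positivity)
        _ = (r - 2) * (|y| / (Z / 8) * Real.log (1 + Z / 8)) := by ring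
        _ ≤ _ := mul_le_mul_of_nonneg_left hl (by linarith)
    rw [Real.rpow_def_of_pos (by positivity : 0 < 1 + |y|), ← Real.exp_add]
    have h2 : Real.exp (-K + 2 * K * |y| / Z + Real.log (1 + |y|) * -(r - 2)) ≤ Real.exp (-K) := by
      apply Real.exp_le_exp.2
      linarith
    have : 0 ≤ (1 + Z / 8) ^ (-r) := by positivity
    linarith
  · push Not at hc
    have hL : 0 ≤ Real.log (1 + Z / 8) := Real.log_nonneg (by linarith)
    have h1 : (1 + |y|) ^ (-(r - 2)) ≤ 1 :=
      Real.rpow_le_one_of_one_le_of_nonpos (by linarith) (by linarith)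
    have h3 : 2 * K * |y| / Z ≤ K / 4 := by
      rw [div_le_iff₀ hZ]
      nlinarith
    have h2 : Real.exp (-K + 2 * K * |y| / Z) ≤ (1 + Z / 8) ^ (-r) := by
      rw [Real.rpow_def_of_pos (by positivity)]
      apply Real.exp_le_exp.2
      nlinarith
    have h4 := Real.exp_pos (-K)
    have := mul_le_mul h2 h1 (by positivity) (by positivity)
    linarith

/-- large time, far field -/
lemma hk_far (d M r : ℝ) (hd : 0 < d) (hM : 4 * d ≤ M) (hr : 3 ≤ r) :
    ∃ C : ℝ, 0 ≤ C ∧ ∀ z t : ℝ, 1 ≤ t → Real.sqrt t ≤ |z| →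
      (∫ y : ℝ, Real.exp (-(z - y) ^ 2 / (4 * d * t)) / Real.sqrt (4 * Real.pi * d * t)
        * (1 + |y|) ^ (-r)) ≤
      C * ((1 + |z| + Real.sqrt t) ^ (-r) +
        Real.exp (-z ^ 2 / (M * (1 + t))) / Real.sqrt (1 + t)) := by
  have hJ0 : 0 ≤ ∫ y : ℝ, (1 + |y|) ^ (-2 : ℝ) := integral_nonneg (fun y => by
    have := abs_nonneg y
    show (0 : ℝ) ≤ (1 + |y|) ^ (-2 : ℝ)
    positivity)
  set J := ∫ y : ℝ, (1 + |y|) ^ (-2 : ℝ) with hJ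
  refine ⟨16 ^ r + 2 / Real.sqrt (4 * Real.pi * d) * J * (1 + 16 ^ r), by positivity, ?_⟩
  intro z t ht hz
  have hNle := hk_N d t hd ht
  have hpi := Real.pi_pos
  set N := Real.sqrt (4 * Real.pi * d * t) with hN
  have hNpos : 0 < N := Real.sqrt_pos.2 (by positivity)
  have hst : 1 ≤ Real.sqrt t := Real.one_le_sqrt.2 ht
  have hZ : 0 < |z| := by linarith
  have hs : 1 ≤ Real.sqrt (1 + t) := Real.one_le_sqrt.2 (by linarith)
  set K := z ^ 2 / (4 * d * t) with hK
  have hK0 : 0 ≤ K := by positivity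
  have hb : 0 < 1 / (4 * d * t) := by positivity
  obtain ⟨hi, hv⟩ := hk_gauss (1 / (4 * d * t)) z hb
  have hsq : Real.sqrt (Real.pi / (1 / (4 * d * t))) = N := by
    rw [hN]
    congr 1
    field_simp
  have hS : (1 + |z| / 8) ^ (-r) ≤ 16 ^ r * (1 + |z| + Real.sqrt t) ^ (-r) :=
    hk_rpow r _ _ 16 (by linarith) (by positivity) (by positivity) (by norm_num) (by linarith)
  have hpt : ∀ y : ℝ, Real.exp (-(z - y) ^ 2 / (4 * d * t)) / N * (1 + |y|) ^ (-r) ≤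
      ((1 + |z| / 8) ^ (-r) / N) * Real.exp (-(1 / (4 * d * t)) * (z - y) ^ 2) +
      (1 / N * (Real.exp (-K) + (1 + |z| / 8) ^ (-r))) * (1 + |y|) ^ (-2 : ℝ) := by
    intro y
    have hy0 := abs_nonneg y
    have e1 : -(z - y) ^ 2 / (4 * d * t) = -(1 / (4 * d * t)) * (z - y) ^ 2 := by ring
    by_cases hc : |y| ≤ |z| / 8
    · have hk := hk_key K |z| y r hK0 hZ hr hc
      have h1 : Real.exp (-(z - y) ^ 2 / (4 * d * t)) ≤ Real.exp (-K + 2 * K * |y| / |z|) := by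
        apply Real.exp_le_exp.2
        have e2 : -K + 2 * K * |y| / |z| = (-(z ^ 2) + 2 * (|z| * |y|)) / (4 * d * t) := by
          rw [hK, ← sq_abs z]
          field_simp
        rw [e2]
        apply div_le_div_of_nonneg_right _ (by positivity)
        have := le_abs_self (z * y)
        rw [abs_mul] at this
        nlinarith [sq_nonneg y]
      have h2 : Real.exp (-(z - y) ^ 2 / (4 * d * t)) * (1 + |y|) ^ (-r) ≤
          (Real.exp (-K) + (1 + |z| / 8) ^ (-r)) * (1 + |y|) ^ (-2 : ℝ) :=
        (mul_le_mul_of_nonneg_right h1 (by positivity)).trans hk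
      have h3 := mul_le_mul_of_nonneg_left h2 (by positivity : 0 ≤ 1 / N)
      have h4 : 0 ≤ ((1 + |z| / 8) ^ (-r) / N) *
        Real.exp (-(1 / (4 * d * t)) * (z - y) ^ 2) := by positivity
      calc _ = 1 / N * (Real.exp (-(z - y) ^ 2 / (4 * d * t)) * (1 + |y|) ^ (-r)) := by ring
        _ ≤ _ := h3
        _ = (1 / N * (Real.exp (-K) + (1 + |z| / 8) ^ (-r))) * (1 + |y|) ^ (-2 : ℝ) := by ring
        _ ≤ _ := by linarith
    · push Not at hc
      have h1 : (1 + |y|) ^ (-r) ≤ (1 + |z| / 8) ^ (-r) :=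
        Real.rpow_le_rpow_of_nonpos (by positivity) (by linarith) (by linarith)
      have h2 : 0 ≤ (1 / N * (Real.exp (-K) + (1 + |z| / 8) ^ (-r))) * (1 + |y|) ^ (-2 : ℝ) := by
        positivity
      rw [e1]
      calc _ ≤ Real.exp (-(1 / (4 * d * t)) * (z - y) ^ 2) / N * (1 + |z| / 8) ^ (-r) :=
            mul_le_mul_of_nonneg_left h1 (by positivity)
        _ = ((1 + |z| / 8) ^ (-r) / N) * Real.exp (-(1 / (4 * d * t)) * (z - y) ^ 2) := by ring
        _ ≤ _ := by linarith
  have hi1 := hi.const_mul ((1 + |z| / 8) ^ (-r) / N)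
  have hi2 := hk_J.const_mul (1 / N * (Real.exp (-K) + (1 + |z| / 8) ^ (-r)))
  have hmono := integral_mono_of_nonneg (μ := volume)
    (Filter.Eventually.of_forall (fun y : ℝ => by
      have := abs_nonneg y
      show (0 : ℝ) ≤ Real.exp (-(z - y) ^ 2 / (4 * d * t)) / N * (1 + |y|) ^ (-r)
      positivity))
    (hi1.add hi2)
    (Filter.Eventually.of_forall hpt)
  refine hmono.trans ?_
  simp only [Pi.add_apply]
  rw [integral_add hi1 hi2, integral_const_mul, integral_const_mul, hv, hsq, ← hJ]
  have hE := hk_exp d M z t hd hM ht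
  rw [← hK] at hE
  set S := (1 + |z| + Real.sqrt t) ^ (-r)
  have hS0 : 0 ≤ S := by positivity
  set T := (1 + |z| / 8) ^ (-r)
  have hT0 : 0 ≤ T := by positivity
  set E := Real.exp (-z ^ 2 / (M * (1 + t)))
  have hE0 : 0 ≤ E := (Real.exp_pos _).le
  set A := 2 / Real.sqrt (4 * Real.pi * d)
  have hA0 : 0 ≤ A := by positivity
  have hq : 0 ≤ (16 : ℝ) ^ r := by positivity
  have hEs : 0 ≤ E / Real.sqrt (1 + t) := by positivity
  have h5 : T / N * N = T := by field_simp
  have hN2 : 1 / N ≤ A := hNle.trans (div_le_self hA0 hs)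
  have h6 : 1 / N * Real.exp (-K) ≤ A * (E / Real.sqrt (1 + t)) := by
    calc _ ≤ A / Real.sqrt (1 + t) * E := mul_le_mul hNle hE (by positivity) (by positivity)
      _ = _ := by ring
  have h7 : 1 / N * T ≤ A * (16 ^ r * S) := mul_le_mul hN2 hS hT0 hA0
  calc T / N * N + 1 / N * (Real.exp (-K) + T) * J
      = T + (1 / N * Real.exp (-K) + 1 / N * T) * J := by rw [h5]; ring
    _ ≤ 16 ^ r * S + (A * (E / Real.sqrt (1 + t)) + A * (16 ^ r * S)) * J :=
        add_le_add hS (mul_le_mul_of_nonneg_right (add_le_add h6 h7) hJ0)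
    _ ≤ _ := by
        have a1 : 0 ≤ 16 ^ r * (E / Real.sqrt (1 + t)) := by positivity
        have a2 : 0 ≤ A * J * S := by positivity
        have a3 : 0 ≤ A * J * 16 ^ r * (E / Real.sqrt (1 + t)) := by positivity
        linarith

/-- Linear heat-semigroup estimate for algebraically localized data. -/
theorem heat_semigroup_estimate_algebraic_data
    (d c M r : ℝ) (hd : 0 < d) (hM : 4 * d ≤ M) (hr : 3 ≤ r) :
    ∃ C : ℝ, 0 < C ∧ ∀ x t : ℝ, 0 < t →
      (∫ y : ℝ, driftKernel d c (x - y) t * (1 + |y|) ^ (-r)) ≤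
        C * ((1 + |x + c * t| + Real.sqrt t) ^ (-r) +
          Real.exp (-(x + c * t) ^ 2 / (M * (1 + t))) / Real.sqrt (1 + t)) := by
  obtain ⟨C1, h1, H1⟩ := hk_small d r hd hr
  obtain ⟨C2, h2, H2⟩ := hk_center d M r hd hM hr
  obtain ⟨C3, h3, H3⟩ := hk_far d M r hd hM hr
  refine ⟨C1 + C2 + C3, by linarith, ?_⟩
  intro x t ht
  have e : ∀ y : ℝ, x - y + c * t = (x + c * t) - y := fun y => by ring
  simp only [driftKernel, e]
  generalize x + c * t = z
  have hS : 0 ≤ (1 + |z| + Real.sqrt t) ^ (-r) := by positivity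
  have hE : 0 ≤ Real.exp (-z ^ 2 / (M * (1 + t))) / Real.sqrt (1 + t) := by positivity
  have H1 := H1 z t ht
  have H2 := H2 z t
  have H3 := H3 z t
  set S := (1 + |z| + Real.sqrt t) ^ (-r)
  set E := Real.exp (-z ^ 2 / (M * (1 + t))) / Real.sqrt (1 + t)
  have a1 := mul_nonneg h1.le hS
  have a2 := mul_nonneg h1.le hE
  have a3 := mul_nonneg h2 hS
  have a4 := mul_nonneg h2 hE
  have a5 := mul_nonneg h3 hS
  have a6 := mul_nonneg h3 hE
  rcases le_total t 1 with h | h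
  · have := H1 h
    linarith
  · rcases le_total |z| (Real.sqrt t) with h' | h'
    · have := H2 h h'
      linarith
    · have := H3 h h'
      linarith
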